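/- Let T be a complete first-order theory. Then T is rosy if and only if þ-forking satisfies symmetry, i.e. for all tuples a, b and all sets A in the monster model, tp(a/Ab) does not þ-fork over A if and only if tp(b/Aa) does not þ-fork over A. -/

import Mathlib

/- Framework for þ-forking inside a monster model, following Onshuus,
   "th-Forking, Algebraic Independence and Examples of Rosy Theories". -/

open FirstOrder FirstOrder.Language Set Cardinal

universe u

namespace ThForking

variable (L : FirstOrder.Language.{u, u}) {M : Type u} [L.Structure M]

/-- `a` and `a'` have the same type over the parameter set `A` (computed in the
ambient (monster) model `M`). -/
def SameType (A : Set M) {α : Type*} (a a' : α → M) : Prop :=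
  ∀ (m : ℕ) (c : Fin m → M), (∀ i, c i ∈ A) →
    ∀ φ : L.Formula (α ⊕ Fin m),
      φ.Realize (Sum.elim a c) ↔ φ.Realize (Sum.elim a' c)

/-- The set of realizations (in the monster model) of `tp(a/A)`. -/
def typeSet (A : Set M) {n : ℕ} (a : Fin n → M) : Set (Fin n → M) :=
  {a' | SameType L A a a'}

/-- `tp(a/A)` is algebraic: it has only finitely many realizations. -/
def IsAlgebraicTuple (A : Set M) {n : ℕ} (a : Fin n → M) : Prop :=
  (typeSet L A a).Finite

/-- The family of formulas `{δ(x, b) : b ∈ S}` is `k`-inconsistent: any `k`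
pairwise distinct instances are jointly unsatisfiable. -/
def KInconsistent {n m : ℕ} (δ : L.Formula (Fin n ⊕ Fin m))
    (S : Set (Fin m → M)) (k : ℕ) : Prop :=
  ∀ bs : Fin k → (Fin m → M), (∀ i, bs i ∈ S) → Function.Injective bs →
    ¬ ∃ x : Fin n → M, ∀ i, δ.Realize (Sum.elim x (bs i))

/-- The formula `δ(x, b)` strongly divides over `A`. -/
def StronglyDivides {n m : ℕ} (δ : L.Formula (Fin n ⊕ Fin m))
    (b : Fin m → M) (A : Set M) : Prop :=
  ¬ IsAlgebraicTuple L A b ∧ ∃ k : ℕ, KInconsistent L δ (typeSet L A b) k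

/-- The formula `δ(x, b)` þ-divides over `A`. -/
def ThDivides {n m : ℕ} (δ : L.Formula (Fin n ⊕ Fin m))
    (b : Fin m → M) (A : Set M) : Prop :=
  ∃ (p : ℕ) (c : Fin p → M), StronglyDivides L δ b (A ∪ Set.range c)

/-- The formula `φ(x, d)` þ-forks over `A`: it implies a finite disjunction of
formulas each of which þ-divides over `A`. -/
def ThForksFormula {n l : ℕ} (φ : L.Formula (Fin n ⊕ Fin l))
    (d : Fin l → M) (A : Set M) : Prop :=
  ∃ (s m : ℕ) (ψ : Fin s → L.Formula (Fin n ⊕ Fin m)) (b : Fin s → Fin m → M),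
    (∀ x : Fin n → M, φ.Realize (Sum.elim x d) →
      ∃ i, (ψ i).Realize (Sum.elim x (b i))) ∧
    ∀ i, ThDivides L (ψ i) (b i) A

/-- The type `tp(a/B)` þ-forks over `A`: it contains a formula (with parameters
from `B`) which þ-forks over `A`. -/
def TypeThForks {n : ℕ} (a : Fin n → M) (B A : Set M) : Prop :=
  ∃ (l : ℕ) (d : Fin l → M) (φ : L.Formula (Fin n ⊕ Fin l)),
    (∀ i, d i ∈ B) ∧ φ.Realize (Sum.elim a d) ∧ ThForksFormula L φ d A

/-- The local þ-rank `þ(p, δ, π, k) ≥ N`, where the partial type `p` is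
represented by its set `S` of realizations in the monster model. -/
def RankGE {n m r : ℕ} (δ : L.Formula (Fin n ⊕ Fin m))
    (π : L.Formula (Fin m ⊕ Fin r)) (k : ℕ) : ℕ → Set (Fin n → M) → Prop
  | 0, S => S.Nonempty
  | (N + 1), S => ∃ c : Fin r → M,
      {a : Fin m → M | π.Realize (Sum.elim a c) ∧
        RankGE δ π k N (S ∩ {x | δ.Realize (Sum.elim x a)})}.Infinite ∧
      KInconsistent L δ {a | π.Realize (Sum.elim a c)} k

/-- The theory of the monster model `M` is rosy: all of its local þ-ranks take
finite values. -/
def IsRosy : Prop :=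
  ∀ (n m r k : ℕ) (δ : L.Formula (Fin n ⊕ Fin m)) (π : L.Formula (Fin m ⊕ Fin r)),
    ∃ N : ℕ, ¬ RankGE L δ π k N (Set.univ : Set (Fin n → M))

/-- `M` is a monster model with respect to the cardinal `κ`: it is infinite,
`κ`-saturated and (finite-tuple) strongly `κ`-homogeneous. -/
structure IsMonster (κ : Cardinal.{u}) : Prop where
  infinite : Infinite M
  saturated : ∀ (A : Set M), #A < κ → ∀ (n : ℕ)
    (Φ : Set (Σ m : ℕ, L.Formula (Fin n ⊕ Fin m) × (Fin m → M))),
    (∀ q ∈ Φ, ∀ i, q.2.2 i ∈ A) →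
    (∀ s : Finset (Σ m : ℕ, L.Formula (Fin n ⊕ Fin m) × (Fin m → M)), ↑s ⊆ Φ →
      ∃ x : Fin n → M, ∀ q ∈ s, q.2.1.Realize (Sum.elim x q.2.2)) →
    ∃ x : Fin n → M, ∀ q ∈ Φ, q.2.1.Realize (Sum.elim x q.2.2)
  homogeneous : ∀ (A : Set M), #A < κ → ∀ (n : ℕ) (a a' : Fin n → M),
    SameType L A a a' →
    ∃ σ : M ≃[L] M, (∀ x ∈ A, σ x = x) ∧ σ ∘ a = a'

end ThForking

/-!
If `T` is rosy, suppose `tp(b/Aa)` þ-forks over `A` but `tp(a/Ab)` does not. Extracting formulas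
from the dividing disjuncts gives finitely many rank triples, and the þ-rank with respect to all of
them jointly is still finite. As `tp(a/Ab)` does not þ-fork, `a` has conjugates over `Ab` that are
algebraically independent over `A` from any given small set. The corresponding conjugates of the
þ-forking formula all contain `b`, and adding them one at a time lowers the rank at every step, so
that after finitely many steps `b` lies in a set of rank less than `0`.

If some local þ-rank is infinite, compactness gives a sequence of dividing parameters `b i`, each
non-algebraic over the preceding ones, with all `δ(x, b i)` realized by a common `x`. Let `C` be the
set of all these parameters and `a` a limit of the `b i` over `Cx` along an ultrafilter. Then
`δ(x, a)` þ-divides over `C`, whereas `tp(a/Cx)` is finitely satisfiable in `C` and hence does not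
þ-fork over `C`, against symmetry.
-/

namespace ThForking

variable {L : FirstOrder.Language.{u, u}} {M : Type u} [L.Structure M]

section Definability

variable {α β γ : Type*} {A : Set M}

theorem definable_setOf_realize (φ : L.Formula α) : A.Definable L {v : α → M | φ.Realize v} :=
  (empty_definable_iff.2 ⟨φ, rfl⟩).mono (empty_subset A)

theorem definable_setOf_elim_mem {D : Set (α ⊕ β → M)} (hD : A.Definable L D) (f : α → γ)
    (g : β → γ) : A.Definable L {w : γ → M | Sum.elim (w ∘ f) (w ∘ g) ∈ D} := by
  simp only [← Sum.comp_elim]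
  exact hD.preimage_comp _

theorem definable_fiber {D : Set (α ⊕ β → M)} (hD : A.Definable L D) {c : β → M}
    (hc : range c ⊆ A) : A.Definable L {y : α → M | Sum.elim y c ∈ D} := by
  obtain ⟨φ, rfl⟩ := definable_iff_exists_formula_sum.1 hD
  refine definable_iff_exists_formula_sum.2
    ⟨φ.relabel (Sum.elim Sum.inl
      (Sum.elim Sum.inr fun i => Sum.inl ⟨c i, hc (mem_range_self i)⟩)), ?_⟩
  ext y
  simp only [mem_ofPred_eq, Formula.realize_relabel]
  refine iff_of_eq (congrArg _ ?_)
  funext i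
  rcases i with i | i | i <;> rfl

theorem definable_fiber_left {D : Set (α ⊕ β → M)} (hD : A.Definable L D) {c : α → M}
    (hc : range c ⊆ A) : A.Definable L {y : β → M | Sum.elim c y ∈ D} :=
  definable_fiber (definable_setOf_elim_mem hD Sum.inr Sum.inl) hc

theorem exists_definable_eq_fiber {c : β → M} {D : Set (α → M)}
    (hD : (A ∪ range c).Definable L D) :
    ∃ E : Set (α ⊕ β → M), A.Definable L E ∧ D = {y | Sum.elim y c ∈ E} := by
  obtain ⟨φ, rfl⟩ := definable_iff_exists_formula_sum.1 hD
  have hparam (x : (A ∪ range c : Set M)) :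
      ∃ s : A ⊕ β, Sum.elim (fun a : A => (a : M)) c s = x := by
    obtain ⟨x, hx | ⟨i, rfl⟩⟩ := x
    exacts [⟨Sum.inl ⟨x, hx⟩, rfl⟩, ⟨Sum.inr i, rfl⟩]
  choose f hf using hparam
  refine ⟨_, definable_iff_exists_formula_sum.2
    ⟨φ.relabel (Sum.elim (Sum.map id Sum.inr ∘ f) (Sum.inr ∘ Sum.inl)), rfl⟩, ?_⟩
  ext y
  simp only [mem_ofPred_eq, Formula.realize_relabel]
  refine iff_of_eq (congrArg _ ?_)
  funext i
  rcases i with x | i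
  · simp only [Sum.elim_inl, Function.comp_apply, ← hf x]
    rcases f x with a | i <;> rfl
  · rfl

theorem exists_formula_of_definable {D : Set (α → M)} (hD : A.Definable L D) :
    ∃ (m : ℕ) (c : Fin m → M) (φ : L.Formula (α ⊕ Fin m)),
      range c ⊆ A ∧ D = {x | φ.Realize (Sum.elim x c)} := by
  obtain ⟨A₀, hA₀, hD₀⟩ := definable_iff_finitely_definable.1 hD
  obtain ⟨m, c, -, hc⟩ := A₀.finite_toSet.fin_param
  obtain ⟨E, hE, rfl⟩ := exists_definable_eq_fiber (A := ∅) (c := c) (by simpa [hc] using hD₀)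
  obtain ⟨φ, rfl⟩ := empty_definable_iff.1 hE
  exact ⟨m, c, φ, hc.trans_subset hA₀, rfl⟩

theorem definable_setOf_comp_eq [Finite β] (f g : β → α) :
    A.Definable L {v : α → M | v ∘ f = v ∘ g} := by
  have hfg : {v : α → M | v ∘ f = v ∘ g} = ⋂ i, {v | v (f i) = v (g i)} := by
    ext v
    simp [funext_iff]
  rw [hfg]
  exact definable_iInter_of_finite fun i => ⟨(Term.var (f i)).equal (Term.var (g i)), by ext; simp⟩

theorem coe_le_encard_iff_exists_injective {X : Type*} {S : Set X} {l : ℕ} :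
    (l : ℕ∞) ≤ S.encard ↔ ∃ f : Fin l → X, Function.Injective f ∧ ∀ i, f i ∈ S := by
  constructor
  · intro h
    obtain ⟨T, hTS, hT⟩ := exists_subset_encard_eq h
    obtain ⟨n, f, hf, rfl⟩ := (finite_of_encard_eq_coe hT).fin_param
    obtain rfl : n = l := by simpa [← image_univ, hf.encard_image] using hT
    exact ⟨f, hf, fun i => hTS (mem_range_self i)⟩
  · rintro ⟨f, hf, hfS⟩
    calc (l : ℕ∞) = (range f).encard := by simp [← image_univ, hf.encard_image]
      _ ≤ S.encard := encard_le_encard (range_subset_iff.2 hfS)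

theorem definable_setOf_injective_rows [Finite β] (l : ℕ) {E : Set (α ⊕ β → M)}
    (hE : A.Definable L E) :
    A.Definable L {v : α ⊕ Fin l × β → M |
      (fun i b => v (Sum.inr (i, b))).Injective ∧
        ∀ i, Sum.elim (v ∘ Sum.inl) (fun b => v (Sum.inr (i, b))) ∈ E} := by
  let row (i : Fin l) : β → α ⊕ Fin l × β := fun b => Sum.inr (i, b)
  convert (definable_iInter_of_finite fun q : {q : Fin l × Fin l // q.1 ≠ q.2} =>
    (definable_setOf_comp_eq (L := L) (row q.1.1) (row q.1.2)).compl).inter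
      (definable_iInter_of_finite fun i => definable_setOf_elim_mem hE Sum.inl (row i)) using 1
  ext v
  simp only [mem_ofPred_eq, mem_inter_iff, mem_iInter, mem_compl_iff, Subtype.forall, Prod.forall]
  exact and_congr_left' ⟨fun h i j hij hrow => hij (h hrow),
    fun h i j hrow => by_contra fun hij => h i j hij hrow⟩

theorem definable_setOf_coe_le_encard [Finite β] (l : ℕ) {E : Set (α ⊕ β → M)}
    (hE : A.Definable L E) :
    A.Definable L {v : α → M | (l : ℕ∞) ≤ {w : β → M | Sum.elim v w ∈ E}.encard} := by
  convert (definable_setOf_injective_rows l hE).exists_of_finite using 1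
  ext v
  simp only [mem_ofPred_eq, coe_le_encard_iff_exists_injective]
  exact ⟨fun ⟨w, hw⟩ => ⟨fun q => w q.1 q.2, hw⟩, fun ⟨u, hu⟩ => ⟨fun i b => u (i, b), hu⟩⟩

theorem definable_singleton [Finite α] {d : α → M} (hd : range d ⊆ A) :
    A.Definable L {d} := by
  convert definable_fiber (definable_setOf_comp_eq (L := L) (Sum.inl : α → α ⊕ α) Sum.inr) hd
    using 1
  ext y
  simp

end Definability

section Types

variable {α β : Type*} {A B : Set M} {a a' : α → M}

theorem sameType_iff :
    SameType L A a a' ↔ ∀ D : Set (α → M), A.Definable L D → (a ∈ D ↔ a' ∈ D) := by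
  constructor
  · intro h D hD
    obtain ⟨m, c, φ, hc, rfl⟩ := exists_formula_of_definable hD
    exact h m c (range_subset_iff.1 hc) φ
  · intro h m c hc φ
    exact h _ (definable_fiber (definable_setOf_realize φ) (range_subset_iff.2 hc))

theorem sameType_of_forall_imp (h : ∀ D : Set (α → M), A.Definable L D → a ∈ D → a' ∈ D) :
    SameType L A a a' :=
  sameType_iff.2 fun D hD => ⟨h D hD, fun ha' => by_contra fun ha => h _ hD.compl ha ha'⟩

theorem SameType.comp (h : SameType L A a a') (f : β → α) : SameType L A (a ∘ f) (a' ∘ f) :=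
  sameType_iff.2 fun _ hD => sameType_iff.1 h _ (hD.preimage_comp f)

theorem typeSet_subset_of_mem {m : ℕ} {e : Fin m → M} {D : Set (Fin m → M)}
    (hD : A.Definable L D) (he : e ∈ D) : typeSet L A e ⊆ D :=
  fun _ h => (sameType_iff.1 h D hD).1 he

theorem typeSet_anti (hAB : A ⊆ B) {m : ℕ} (e : Fin m → M) : typeSet L B e ⊆ typeSet L A e :=
  fun _ h m c hc => h m c fun i => hAB (hc i)

theorem kInconsistent_iff_encard_lt {n m k : ℕ} {δ : L.Formula (Fin n ⊕ Fin m)}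
    {S : Set (Fin m → M)} :
    KInconsistent L δ S k ↔ ∀ x, {b ∈ S | δ.Realize (Sum.elim x b)}.encard < k := by
  simp only [← not_le, coe_le_encard_iff_exists_injective, KInconsistent]
  exact ⟨fun h x ⟨bs, hbs, hx⟩ => h bs (fun i => (hx i).1) hbs ⟨x, fun i => (hx i).2⟩,
    fun h bs hS hbs ⟨x, hx⟩ => h x ⟨bs, hbs, fun i => ⟨hS i, hx i⟩⟩⟩

theorem KInconsistent.mono {n m k : ℕ} {δ : L.Formula (Fin n ⊕ Fin m)} {S T : Set (Fin m → M)}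
    (hST : S ⊆ T) (h : KInconsistent L δ T k) : KInconsistent L δ S k :=
  fun bs hbs => h bs fun i => hST (hbs i)

end Types

section Saturation

variable {κ : Cardinal.{u}} {A : Set M}

theorem mk_union_lt (hκ : ℵ₀ < κ) {A F : Set M} (hA : #A < κ) (hF : #F < κ) :
    #(A ∪ F : Set M) < κ :=
  (mk_union_le A F).trans_lt (add_lt_of_lt hκ.le hA hF)

theorem mk_lt_of_countable (hκ : ℵ₀ < κ) {F : Set M} (hF : F.Countable) : #F < κ :=
  hF.le_aleph0.trans_lt hκ

theorem IsMonster.nonempty_iInter_of_directed (hM : IsMonster L (M := M) κ) (hA : #A < κ)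
    {α : Type*} [Finite α] {ι : Type*} [Nonempty ι] {D : ι → Set (α → M)}
    (hD : ∀ i, A.Definable L (D i)) (hdir : Directed (· ⊇ ·) D) (hne : ∀ i, (D i).Nonempty) :
    (⋂ i, D i).Nonempty := by
  classical
  obtain ⟨n, ⟨e⟩⟩ := Finite.exists_equiv_fin α
  have hformula (i : ι) := exists_formula_of_definable ((hD i).preimage_comp e)
  choose m c φ hc hφ using hformula
  have hmem (i : ι) (x : Fin n → M) : x ∘ e ∈ D i ↔ (φ i).Realize (Sum.elim x (c i)) :=
    Set.ext_iff.1 (hφ i) x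
  obtain ⟨x, hx⟩ := hM.saturated A hA n (range fun i => ⟨m i, φ i, c i⟩)
    (forall_mem_range.2 fun i j => hc i (mem_range_self j)) fun s hs => by
      obtain ⟨t, -, rfl⟩ := Finset.subset_set_image_iff.1 (hs.trans_eq image_univ.symm)
      obtain ⟨j, hj⟩ := hdir.finset_le t
      obtain ⟨x, hx⟩ := hne j
      refine ⟨x ∘ e.symm, Finset.forall_mem_image.2 fun i hi => (hmem i _).1 (hj i hi ?_)⟩
      simpa [Function.comp_assoc] using hx
  exact ⟨x ∘ e, mem_iInter.2 fun i => (hmem i x).2 (hx _ (mem_range_self i))⟩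

theorem IsMonster.exists_forall_mem_iff_eventually (hM : IsMonster L (M := M) κ) (hA : #A < κ)
    {α : Type*} [Finite α] {ι : Type*} (U : Ultrafilter ι) (b : ι → α → M) :
    ∃ v : α → M, ∀ D, A.Definable L D → (v ∈ D ↔ ∀ᶠ i in U, b i ∈ D) := by
  let J := {D : Set (α → M) // A.Definable L D ∧ ∀ᶠ i in U, b i ∈ D}
  have : Nonempty J := ⟨univ, definable_univ, Filter.univ_mem⟩
  obtain ⟨v, hv⟩ := hM.nonempty_iInter_of_directed hA (D := fun D : J => D.1) (fun D => D.2.1)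
    (fun D E => ⟨⟨D.1 ∩ E.1, D.2.1.inter E.2.1, D.2.2.and E.2.2⟩, inter_subset_left,
      inter_subset_right⟩) fun D => D.2.2.exists.imp' b fun _ h => h
  have hlim (D : Set (α → M)) (hD : A.Definable L D) (hb : ∀ᶠ i in U, b i ∈ D) : v ∈ D :=
    mem_iInter.1 hv ⟨D, hD, hb⟩
  refine ⟨v, fun D hD => ⟨fun hvD => ?_, hlim D hD⟩⟩
  by_contra hb
  exact hlim Dᶜ hD.compl (Ultrafilter.eventually_not.2 hb) hvD

theorem IsMonster.exists_definable_forall_encard_lt (hM : IsMonster L (M := M) κ) (hA : #A < κ)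
    {γ : Type*} [Finite γ] {m k : ℕ} {E : Set (γ ⊕ Fin m → M)} (hE : A.Definable L E)
    {e : Fin m → M} (h : ∀ u, {y ∈ typeSet L A e | Sum.elim u y ∈ E}.encard < k) :
    ∃ D, A.Definable L D ∧ e ∈ D ∧ ∀ u, {y ∈ D | Sum.elim u y ∈ E}.encard < k := by
  by_contra! hno
  let J := {D : Set (Fin m → M) // A.Definable L D ∧ e ∈ D}
  have : Nonempty J := ⟨univ, definable_univ, mem_univ e⟩
  let W (D : J) : Set (γ ⊕ Fin k × Fin m → M) :=
    {v | (fun i b => v (Sum.inr (i, b))).Injective ∧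
      ∀ i, Sum.elim (v ∘ Sum.inl) (fun b => v (Sum.inr (i, b))) ∈ {w | w ∘ Sum.inr ∈ D.1} ∩ E}
  obtain ⟨v, hv⟩ := hM.nonempty_iInter_of_directed hA (D := W)
    (fun D => definable_setOf_injective_rows k ((D.2.1.preimage_comp Sum.inr).inter hE))
    (fun D D' => ⟨⟨D.1 ∩ D'.1, D.2.1.inter D'.2.1, D.2.2, D'.2.2⟩,
      fun v hv => ⟨hv.1, fun i => ⟨(hv.2 i).1.1, (hv.2 i).2⟩⟩,
      fun v hv => ⟨hv.1, fun i => ⟨(hv.2 i).1.2, (hv.2 i).2⟩⟩⟩)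
    fun D => by
      obtain ⟨u, hu⟩ := hno D.1 D.2.1 D.2.2
      obtain ⟨y, hy, hyD⟩ := coe_le_encard_iff_exists_injective.1 hu
      exact ⟨Sum.elim u fun q => y q.1 q.2, hy, hyD⟩
  rw [mem_iInter] at hv
  refine (h (v ∘ Sum.inl)).not_ge (coe_le_encard_iff_exists_injective.2
    ⟨_, (hv ⟨univ, definable_univ, mem_univ e⟩).1, fun i => ⟨sameType_of_forall_imp ?_,
      ((hv ⟨univ, definable_univ, mem_univ e⟩).2 i).2⟩⟩)
  exact fun D hD he => ((hv ⟨D, hD, he⟩).2 i).1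

theorem IsMonster.exists_definable_kInconsistent (hM : IsMonster L (M := M) κ) (hA : #A < κ)
    {n m k : ℕ} {δ : L.Formula (Fin n ⊕ Fin m)} {e : Fin m → M}
    (h : KInconsistent L δ (typeSet L A e) k) :
    ∃ D, A.Definable L D ∧ e ∈ D ∧ KInconsistent L δ D k := by
  simp only [kInconsistent_iff_encard_lt] at h ⊢
  exact hM.exists_definable_forall_encard_lt hA (definable_setOf_realize δ) h

/-- Every fiber of `χ` over a tuple of the second sort has fewer than `k` elements, so that a point
of such a fiber is algebraic over its base, uniformly in the base. -/
def HasBoundedFibers {α γ : Type*} (χ : Set (α ⊕ γ → M)) (k : ℕ) : Prop :=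
  ∀ c : γ → M, {y : α → M | Sum.elim y c ∈ χ}.encard < k

theorem definable_setOf_fiber_encard_lt {α γ : Type*} [Finite α] {E : Set (α ⊕ γ → M)}
    (hE : A.Definable L E) (k : ℕ) :
    A.Definable L {w ∈ E | {y | Sum.elim y (w ∘ Sum.inr) ∈ E}.encard < k} := by
  have hswap : A.Definable L {v : γ ⊕ α → M | Sum.elim (v ∘ Sum.inr) (v ∘ Sum.inl) ∈ E} :=
    definable_setOf_elim_mem hE _ _
  convert hE.inter ((definable_setOf_coe_le_encard k hswap).preimage_comp Sum.inr).compl using 1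
  ext w
  simp [Function.comp_def]

theorem hasBoundedFibers_setOf_fiber_encard_lt {α γ : Type*} (E : Set (α ⊕ γ → M)) {k : ℕ}
    (hk : 0 < k) :
    HasBoundedFibers {w ∈ E | {y | Sum.elim y (w ∘ Sum.inr) ∈ E}.encard < k} k := by
  intro c
  rcases {y : α → M | Sum.elim y c ∈ {w ∈ E | {y | Sum.elim y (w ∘ Sum.inr) ∈ E}.encard < k}
    }.eq_empty_or_nonempty with hempty | ⟨y, -, hc⟩
  · rw [hempty, encard_empty]
    exact_mod_cast hk
  · exact (encard_le_encard fun y hy => hy.1).trans_lt hc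

theorem IsMonster.finite_typeSet_union_range_iff (hM : IsMonster L (M := M) κ) (hκ : ℵ₀ < κ)
    (hA : #A < κ) {γ : Type*} [Finite γ] {m : ℕ} {e : Fin m → M} {c : γ → M} :
    (typeSet L (A ∪ range c) e).Finite ↔ ∃ (χ : Set (Fin m ⊕ γ → M)) (k : ℕ),
      A.Definable L χ ∧ HasBoundedFibers χ k ∧ Sum.elim e c ∈ χ := by
  constructor
  · intro hfin
    obtain ⟨k, hk, hlt⟩ : ∃ k : ℕ, 0 < k ∧ (typeSet L (A ∪ range c) e).encard < k :=
      ⟨_, Nat.succ_pos _, hfin.cast_ncard_eq.symm.trans_lt (Nat.cast_lt.2 (Nat.lt_succ_self _))⟩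
    obtain ⟨D, hD, heD, hDlt⟩ := hM.exists_definable_forall_encard_lt (γ := Fin 0)
      (mk_union_lt hκ hA (mk_lt_of_countable hκ (finite_range c).countable))
      (definable_univ (L := L)) (e := e) fun u => by simpa using hlt
    obtain ⟨E, hE, rfl⟩ := exists_definable_eq_fiber hD
    exact ⟨_, _, definable_setOf_fiber_encard_lt hE _,
      hasBoundedFibers_setOf_fiber_encard_lt E hk, heD, by simpa using hDlt Fin.elim0⟩
  · rintro ⟨χ, k, hχ, hk, hec⟩
    exact (finite_of_encard_le_coe (hk c).le).subset
      (typeSet_subset_of_mem (definable_fiber (hχ.mono subset_union_left) subset_union_right) hec)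

end Saturation

section ForkingIdeal

variable {κ : Cardinal.{u}} {n m : ℕ} {A B C : Set M}

/-- `Y` is defined by an instance of a formula that þ-divides over `A`. -/
def ThDividesSet (L : FirstOrder.Language.{u, u}) [L.Structure M] (A : Set M)
    (Y : Set (Fin n → M)) : Prop :=
  ∃ (m : ℕ) (ψ : L.Formula (Fin n ⊕ Fin m)) (b : Fin m → M),
    ThDivides L ψ b A ∧ Y = {x | ψ.Realize (Sum.elim x b)}

/-- The þ-forking ideal over `A`: the sets covered by finitely many þ-dividing ones. -/
def ThForksSet (L : FirstOrder.Language.{u, u}) [L.Structure M] (A : Set M)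
    (X : Set (Fin n → M)) : Prop :=
  ∃ 𝒴 : Set (Set (Fin n → M)), 𝒴.Finite ∧ (∀ Y ∈ 𝒴, ThDividesSet L A Y) ∧ X ⊆ ⋃₀ 𝒴

theorem ThForksSet.mono {X X' : Set (Fin n → M)} (h : ThForksSet L A X) (hX : X' ⊆ X) :
    ThForksSet L A X' :=
  let ⟨𝒴, hfin, hdiv, hcover⟩ := h
  ⟨𝒴, hfin, hdiv, hX.trans hcover⟩

theorem ThForksSet.union {X X' : Set (Fin n → M)} (h : ThForksSet L A X)
    (h' : ThForksSet L A X') : ThForksSet L A (X ∪ X') := by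
  obtain ⟨𝒴, hfin, hdiv, hcover⟩ := h
  obtain ⟨𝒴', hfin', hdiv', hcover'⟩ := h'
  exact ⟨𝒴 ∪ 𝒴', hfin.union hfin', fun Y hY => hY.elim (hdiv Y) (hdiv' Y),
    (union_subset_union hcover hcover').trans_eq (sUnion_union _ _).symm⟩

theorem ThDividesSet.thForksSet {Y : Set (Fin n → M)} (h : ThDividesSet L A Y) :
    ThForksSet L A Y :=
  ⟨{Y}, finite_singleton Y, by simpa using h, by simp⟩

theorem typeSet_comp_injOn {m' : ℕ} {f : Fin m' → Fin m} {g : Fin m → Fin m'} (hfg : f ∘ g = id)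
    (b : Fin m → M) : InjOn (· ∘ g) (typeSet L A (b ∘ f)) := by
  have hretract : ∀ y ∈ typeSet L A (b ∘ f), y ∘ (g ∘ f) = y ∘ id :=
    typeSet_subset_of_mem (definable_setOf_comp_eq _ _)
      (congrArg ((b ∘ ·) ∘ (· ∘ f)) hfg)
  intro y hy y' hy' hyy'
  calc y = (y ∘ g) ∘ f := (hretract y hy).symm
    _ = (y' ∘ g) ∘ f := congrArg (· ∘ f) hyy'
    _ = y' := hretract y' hy'

theorem ThDivides.relabel {m' : ℕ} {ψ : L.Formula (Fin n ⊕ Fin m)} {b : Fin m → M}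
    (h : ThDivides L ψ b A) {f : Fin m' → Fin m} {g : Fin m → Fin m'} (hfg : f ∘ g = id) :
    ThDivides L (ψ.relabel (Sum.map id g)) (b ∘ f) A := by
  obtain ⟨p, c, hinf, k, hk⟩ := h
  have hcomp (y : Fin m → M) : (y ∘ f) ∘ g = y := congrArg (y ∘ ·) hfg
  have hmaps {y : Fin m' → M} (hy : y ∈ typeSet L (A ∪ range c) (b ∘ f)) :
      y ∘ g ∈ typeSet L (A ∪ range c) b := by
    have hyg := SameType.comp hy g
    rwa [hcomp] at hyg
  refine ⟨p, c, fun hfin => hinf ((hfin.image (· ∘ g)).subset fun y hy => ?_), k, ?_⟩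
  · exact ⟨y ∘ f, SameType.comp hy f, hcomp y⟩
  · rw [kInconsistent_iff_encard_lt] at hk ⊢
    refine fun x => (encard_le_encard_of_injOn
      (t := {y ∈ typeSet L (A ∪ range c) b | ψ.Realize (Sum.elim x y)})
      (fun y hy => ⟨hmaps hy.1, ?_⟩)
      ((typeSet_comp_injOn hfg b).mono fun y hy => hy.1)).trans_lt (hk x)
    simpa [Formula.realize_relabel, Sum.elim_comp_map] using hy.2

theorem ThDivides.exists_pad {m' : ℕ} (hm : m ≤ m') {ψ : L.Formula (Fin n ⊕ Fin m)}
    {b : Fin m → M} (h : ThDivides L ψ b A) :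
    ∃ (ψ' : L.Formula (Fin n ⊕ Fin m')) (b' : Fin m' → M), ThDivides L ψ' b' A ∧
      ∀ x, ψ'.Realize (Sum.elim x b') ↔ ψ.Realize (Sum.elim x b) := by
  have : Nonempty (Fin m) := by
    obtain ⟨p, c, hinf, -⟩ := h
    by_contra hempty
    rw [not_nonempty_iff] at hempty
    exact hinf (toFinite _)
  obtain ⟨f, hf⟩ := (Fin.castLE_injective hm).hasLeftInverse
  refine ⟨_, _, h.relabel hf.comp_eq_id, fun x => ?_⟩
  rw [Formula.realize_relabel, Sum.elim_comp_map, Function.comp_assoc, hf.comp_eq_id]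
  simp

theorem thForksFormula_iff {φ : L.Formula (Fin n ⊕ Fin m)} {d : Fin m → M} :
    ThForksFormula L φ d A ↔ ThForksSet L A {x | φ.Realize (Sum.elim x d)} := by
  constructor
  · rintro ⟨s, m', ψ, b, himp, hdiv⟩
    exact ⟨range fun i => {x | (ψ i).Realize (Sum.elim x (b i))}, finite_range _,
      forall_mem_range.2 fun i => ⟨m', ψ i, b i, hdiv i, rfl⟩, fun x hx => by
        simpa using himp x hx⟩
  · rintro ⟨𝒴, hfin, hdiv, hcover⟩
    obtain ⟨s, Y, -, rfl⟩ := hfin.fin_param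
    choose m' ψ b hψ hY using fun i => hdiv (Y i) (mem_range_self i)
    choose ψ' b' hψ' hiff using fun i =>
      (hψ i).exists_pad (Finset.le_sup (f := m') (Finset.mem_univ i))
    refine ⟨s, _, ψ', b', fun x hx => ?_, hψ'⟩
    obtain ⟨_, ⟨i, rfl⟩, hxi⟩ := hcover hx
    exact ⟨i, (hiff i x).2 (by rwa [hY] at hxi)⟩

theorem typeThForks_iff {a : Fin n → M} :
    TypeThForks L a B A ↔ ∃ X, B.Definable L X ∧ a ∈ X ∧ ThForksSet L A X := by
  constructor
  · rintro ⟨l, d, φ, hd, hφ, hfork⟩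
    exact ⟨_, definable_fiber (definable_setOf_realize φ) (range_subset_iff.2 hd), hφ,
      thForksFormula_iff.1 hfork⟩
  · rintro ⟨X, hX, ha, hfork⟩
    obtain ⟨l, d, φ, hd, rfl⟩ := exists_formula_of_definable hX
    exact ⟨l, d, φ, range_subset_iff.1 hd, ha, thForksFormula_iff.2 hfork⟩

theorem IsMonster.exists_sameType_not_typeThForks (hM : IsMonster L (M := M) κ) (hκ : ℵ₀ < κ)
    (hC : #C < κ) (hB : #B < κ) {a : Fin n → M} (h : ¬ TypeThForks L a C A) :
    ∃ a', SameType L C a a' ∧ ¬ TypeThForks L a' B A := by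
  let J := {P : Set (Fin n → M) × Set (Fin n → M) //
    (C.Definable L P.1 ∧ a ∈ P.1) ∧ B.Definable L P.2 ∧ ThForksSet L A P.2}
  have hempty : ThForksSet L A (∅ : Set (Fin n → M)) :=
    ⟨∅, finite_empty, fun _ hY => hY.elim, empty_subset _⟩
  have : Nonempty J := ⟨(univ, ∅), ⟨definable_univ, mem_univ a⟩, definable_empty, hempty⟩
  obtain ⟨a', ha'⟩ := hM.nonempty_iInter_of_directed (mk_union_lt hκ hC hB)
    (D := fun P : J => P.1.1 \ P.1.2)
    (fun P => (P.2.1.1.mono subset_union_left).sdiff (P.2.2.1.mono subset_union_right))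
    (fun P Q => ⟨⟨(P.1.1 ∩ Q.1.1, P.1.2 ∪ Q.1.2),
        ⟨P.2.1.1.inter Q.2.1.1, P.2.1.2, Q.2.1.2⟩, P.2.2.1.union Q.2.2.1, P.2.2.2.union Q.2.2.2⟩,
      sdiff_subset_sdiff inter_subset_left subset_union_left,
      sdiff_subset_sdiff inter_subset_right subset_union_right⟩)
    fun P => sdiff_nonempty.2 fun hsub =>
      h (typeThForks_iff.2 ⟨P.1.1, P.2.1.1, P.2.1.2, P.2.2.2.mono hsub⟩)
  rw [mem_iInter] at ha'
  refine ⟨a', sameType_of_forall_imp fun D hD haD => ?_, fun hfork => ?_⟩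
  · exact (ha' ⟨(D, ∅), ⟨hD, haD⟩, definable_empty, hempty⟩).1
  · obtain ⟨X, hX, ha'X, hfork⟩ := typeThForks_iff.1 hfork
    exact (ha' ⟨(univ, X), ⟨definable_univ, mem_univ a⟩, hX, hfork⟩).2 ha'X

theorem notMem_of_thDividesSet {Y : Set (Fin n → M)} (hY : ThDividesSet L A Y) {w : Fin n → M}
    (hw : range w ⊆ A) : w ∉ Y := by
  rintro hwY
  obtain ⟨m, ψ, b, ⟨p, c, hinf, k, hk⟩, rfl⟩ := hY
  have hall : typeSet L (A ∪ range c) b ⊆ {b' | ψ.Realize (Sum.elim w b')} :=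
    typeSet_subset_of_mem (definable_fiber_left (definable_setOf_realize ψ)
      (hw.trans subset_union_left)) hwY
  refine hinf (finite_of_encard_le_coe (k := k) ?_)
  calc (typeSet L (A ∪ range c) b).encard
      ≤ {b' ∈ typeSet L (A ∪ range c) b | ψ.Realize (Sum.elim w b')}.encard :=
        encard_le_encard fun b' hb' => ⟨hb', hall hb'⟩
    _ ≤ k := (kInconsistent_iff_encard_lt.1 hk w).le

theorem not_typeThForks_of_forall_exists_range_subset {v : Fin n → M}
    (h : ∀ D, B.Definable L D → v ∈ D → ∃ w ∈ D, range w ⊆ A) : ¬ TypeThForks L v B A := by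
  intro hfork
  obtain ⟨X, hX, hvX, 𝒴, -, hdiv, hcover⟩ := typeThForks_iff.1 hfork
  obtain ⟨w, hwX, hwA⟩ := h X hX hvX
  obtain ⟨Y, hY, hwY⟩ := hcover hwX
  exact notMem_of_thDividesSet (hdiv Y hY) hwA hwY

end ForkingIdeal

section AlgebraicIndependence

variable {κ : Cardinal.{u}} {n m q : ℕ} {A B : Set M}

theorem append_eq_elim_comp (y : Fin m → M) (d : Fin q → M) :
    Fin.append y d = Sum.elim y d ∘ finSumFinEquiv.symm := by
  rw [Equiv.eq_comp_symm]
  funext i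
  rcases i with i | i <;> simp

theorem range_append (y : Fin m → M) (d : Fin q → M) :
    range (Fin.append y d) = range y ∪ range d := by
  rw [append_eq_elim_comp, finSumFinEquiv.symm.surjective.range_comp, Sum.elim_range]

theorem append_left_injective (d : Fin q → M) :
    Function.Injective fun y : Fin m → M => Fin.append y d := by
  intro y y' h
  funext i
  simpa using congrFun h (Fin.castAdd q i)

theorem typeSet_append (e : Fin m → M) {d : Fin q → M} (hd : range d ⊆ A) :
    typeSet L A (Fin.append e d) = (fun y => Fin.append y d) '' typeSet L A e := by
  ext z
  constructor
  · intro hz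
    have hzd : z ∘ Fin.natAdd m = d := typeSet_subset_of_mem
      ((definable_singleton hd).preimage_comp (Fin.natAdd m)) (by ext; simp) hz
    refine ⟨z ∘ Fin.castAdd q, ?_, ?_⟩
    · have hze := SameType.comp hz (Fin.castAdd q)
      rwa [show Fin.append e d ∘ Fin.castAdd q = e by ext; simp] at hze
    · simp only [← hzd]
      exact Fin.append_castAdd_natAdd
  · rintro ⟨y, hy, rfl⟩
    refine sameType_iff.2 fun E hE => ?_
    simp only [append_eq_elim_comp]
    exact sameType_iff.1 hy _ (definable_fiber (hE.preimage_comp finSumFinEquiv.symm) hd)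

/-- The parameters defining `D` are absorbed into the dividing tuple: they do not change over the
conjugates of `e` that matter. -/
theorem thDividesSet_of_definable {c : Fin q → M} {D : Set (Fin n ⊕ Fin m → M)}
    (hD : (A ∪ range c).Definable L D) {e : Fin m → M} {k : ℕ}
    (hinf : (typeSet L (A ∪ range c) e).Infinite)
    (hk : ∀ x, {y ∈ typeSet L (A ∪ range c) e | Sum.elim x y ∈ D}.encard < k) :
    ThDividesSet L A {x | Sum.elim x e ∈ D} := by
  obtain ⟨r, d, φ, hd, rfl⟩ := exists_formula_of_definable hD
  let ψ : L.Formula (Fin n ⊕ Fin (m + r)) :=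
    φ.relabel (Sum.elim (Sum.map id (Fin.castAdd r)) (Sum.inr ∘ Fin.natAdd m))
  have hψ (x : Fin n → M) (y : Fin m → M) : ψ.Realize (Sum.elim x (Fin.append y d)) ↔
      φ.Realize (Sum.elim (Sum.elim x y) d) := by
    rw [Formula.realize_relabel]
    refine iff_of_eq (congrArg _ ?_)
    funext i
    rcases i with (i | i) | i <;> simp
  refine ⟨m + r, ψ, Fin.append e d, ⟨q, c, ?_, k, ?_⟩, by ext; simp [hψ]⟩
  · rw [IsAlgebraicTuple, typeSet_append e hd]
    exact hinf.image (append_left_injective d).injOn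
  · rw [typeSet_append e hd, kInconsistent_iff_encard_lt]
    intro x
    refine lt_of_le_of_lt (encard_le_encard ?_)
      (((append_left_injective d).encard_image _).trans_lt (hk x))
    rintro _ ⟨⟨y, hy, rfl⟩, hxy⟩
    exact ⟨y, ⟨hy, (hψ x y).1 hxy⟩, rfl⟩

/-- Algebraic independence of `F` from `B` over `A`: no tuple of `B` becomes algebraic over a
finitely generated extension of `A` inside `B` when `F` is added to the parameters. -/
def AlgIndep (L : FirstOrder.Language.{u, u}) [L.Structure M] (A B F : Set M) : Prop :=
  ∀ (m q : ℕ) (e : Fin m → M) (c : Fin q → M), range e ⊆ B → range c ⊆ B →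
    (typeSet L (A ∪ range c) e).Infinite → (typeSet L (A ∪ range c ∪ F) e).Infinite

theorem IsMonster.algIndep_range_of_not_typeThForks (hM : IsMonster L (M := M) κ)
    (hκ : ℵ₀ < κ) (hA : #A < κ) (hAB : A ⊆ B) {a : Fin n → M} (h : ¬ TypeThForks L a B A) :
    AlgIndep L A B (range a) := by
  intro m q e c he hc hinf hfin
  obtain ⟨χ, k, hχ, hk, hea⟩ := (hM.finite_typeSet_union_range_iff hκ
    (mk_union_lt hκ hA (mk_lt_of_countable hκ (finite_range c).countable))).1 hfin
  have hdiv : ThDividesSet L A {x : Fin n → M | Sum.elim e x ∈ χ} :=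
    thDividesSet_of_definable (definable_setOf_elim_mem hχ Sum.inr Sum.inl) hinf fun x =>
      (encard_le_encard fun y hy => hy.2).trans_lt (hk x)
  exact h (typeThForks_iff.2 ⟨_, definable_fiber_left (hχ.mono (union_subset hAB hc)) he, hea,
    hdiv.thForksSet⟩)

theorem AlgIndep.empty : AlgIndep L A B ∅ := fun m q e c _ _ h => by rwa [union_empty]

theorem AlgIndep.mono_left {B' F : Set M} (h : AlgIndep L A B F) (hB : B' ⊆ B) :
    AlgIndep L A B' F := fun m q e c he hc => h m q e c (he.trans hB) (hc.trans hB)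

theorem AlgIndep.trans {w : Fin n → M} {F : Set M} (hw : AlgIndep L A B (range w))
    (hF : AlgIndep L A (B ∪ range w) F) : AlgIndep L A B (range w ∪ F) := by
  intro m q e c he hc hinf
  have h := hF m _ e (Fin.append c w) (he.trans subset_union_left)
    (by rw [range_append]; exact union_subset_union_left _ hc)
    (by rw [range_append, ← union_assoc]; exact hw m q e c he hc hinf)
  rwa [range_append, ← union_assoc, union_assoc] at h

end AlgebraicIndependence

section Automorphisms

variable {α β : Type*} {A : Set M}

theorem realize_comp_equiv (σ : M ≃[L] M) (φ : L.Formula α) (v : α → M) :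
    φ.Realize (σ ∘ v) ↔ φ.Realize v :=
  StrongHomClass.realize_formula σ φ

theorem realize_elim_comp_equiv (σ : M ≃[L] M) (φ : L.Formula (α ⊕ β)) (v : α → M) (w : β → M) :
    φ.Realize (Sum.elim (σ ∘ v) (σ ∘ w)) ↔ φ.Realize (Sum.elim v w) := by
  rw [← Sum.comp_elim, realize_comp_equiv]

theorem equiv_comp_injective (σ : M ≃[L] M) : Function.Injective fun v : α → M => σ ∘ v :=
  σ.injective.comp_left

theorem comp_equiv_eq_self {σ : M ≃[L] M} (hσ : ∀ x ∈ A, σ x = x) {c : α → M} (hc : range c ⊆ A) :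
    σ ∘ c = c :=
  funext fun i => hσ _ (hc (mem_range_self i))

theorem comp_equiv_mem_iff {σ : M ≃[L] M} (hσ : ∀ x ∈ A, σ x = x) {D : Set (α → M)}
    (hD : A.Definable L D) {v : α → M} : σ ∘ v ∈ D ↔ v ∈ D := by
  obtain ⟨m, c, φ, hc, rfl⟩ := exists_formula_of_definable hD
  rw [mem_ofPred_eq, mem_ofPred_eq, ← realize_elim_comp_equiv σ φ v c, comp_equiv_eq_self hσ hc]

theorem image_union_range_equiv {σ : M ≃[L] M} (hσ : ∀ x ∈ A, σ x = x) (c : α → M) :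
    σ '' (A ∪ range c) = A ∪ range (σ ∘ c) := by
  rw [image_union, range_comp, image_congr hσ, image_id']

theorem infinite_typeSet_image_equiv (σ : M ≃[L] M) {m : ℕ} {e : Fin m → M}
    (h : (typeSet L A e).Infinite) : (typeSet L (σ '' A) (σ ∘ e)).Infinite := by
  refine (h.image (equiv_comp_injective σ).injOn).mono ?_
  rintro _ ⟨y, hy, rfl⟩ q c hc φ
  choose c' hc' hσc' using hc
  obtain rfl : σ ∘ c' = c := funext hσc'
  rw [realize_elim_comp_equiv, realize_elim_comp_equiv]
  exact hy q c' hc' φ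

theorem kInconsistent_setOf_realize_comp_equiv (σ : M ≃[L] M) {n m r k : ℕ}
    {δ : L.Formula (Fin n ⊕ Fin m)} {π : L.Formula (Fin m ⊕ Fin r)} {c : Fin r → M}
    (h : KInconsistent L δ {y | π.Realize (Sum.elim y c)} k) :
    KInconsistent L δ {y | π.Realize (Sum.elim y (σ ∘ c))} k := by
  rintro bs hbs hinj ⟨x, hx⟩
  have hcancel {γ : Type} (v : γ → M) : σ ∘ (σ.symm ∘ v) = v := by ext; simp
  refine h (fun i => σ.symm ∘ bs i) (fun i => ?_) ((equiv_comp_injective σ.symm).comp hinj)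
    ⟨σ.symm ∘ x, fun i => (realize_elim_comp_equiv σ.symm δ x (bs i)).2 (hx i)⟩
  rw [mem_ofPred_eq, ← realize_elim_comp_equiv σ, hcancel]
  exact hbs i

end Automorphisms

section JointRank

/-- The data `(δ, π, k)` of a local þ-rank on the sets of `n`-tuples. -/
structure RankTriple (L : FirstOrder.Language.{u, u}) (n : ℕ) where
  {m r : ℕ}
  δ : L.Formula (Fin n ⊕ Fin m)
  π : L.Formula (Fin m ⊕ Fin r)
  k : ℕ

variable {n : ℕ} {ι : Type*}

/-- The local þ-rank with respect to finitely many triples at once: each dividing step may use a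
different triple. -/
def JointRankGE (Δ : ι → RankTriple L n) : ℕ → Set (Fin n → M) → Prop
  | 0, S => S.Nonempty
  | N + 1, S => ∃ j, ∃ c : Fin (Δ j).r → M,
      {y : Fin (Δ j).m → M | (Δ j).π.Realize (Sum.elim y c) ∧
        JointRankGE Δ N (S ∩ {x | (Δ j).δ.Realize (Sum.elim x y)})}.Infinite ∧
      KInconsistent L (Δ j).δ {y | (Δ j).π.Realize (Sum.elim y c)} (Δ j).k

theorem RankGE.mono {m r k : ℕ} {δ : L.Formula (Fin n ⊕ Fin m)} {π : L.Formula (Fin m ⊕ Fin r)}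
    {N : ℕ} {S S' : Set (Fin n → M)} (hS : S ⊆ S') (h : RankGE L δ π k N S) :
    RankGE L δ π k N S' := by
  induction N generalizing S S' with
  | zero => exact Nonempty.mono hS h
  | succ N ih =>
    obtain ⟨c, hinf, hk⟩ := h
    exact ⟨c, hinf.mono fun y hy => ⟨hy.1, ih (inter_subset_inter_left _ hS) hy.2⟩, hk⟩

variable {Δ : ι → RankTriple L n} {N : ℕ} {S S' : Set (Fin n → M)}

theorem JointRankGE.map (σ : M ≃[L] M) (hS : MapsTo (σ ∘ ·) S S') (h : JointRankGE Δ N S) :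
    JointRankGE Δ N S' := by
  induction N generalizing S S' with
  | zero => exact h.imp' _ hS
  | succ N ih =>
    obtain ⟨j, c, hinf, hk⟩ := h
    refine ⟨j, σ ∘ c, (hinf.image (equiv_comp_injective σ).injOn).mono ?_,
      kInconsistent_setOf_realize_comp_equiv σ hk⟩
    rintro _ ⟨y, ⟨hπ, hrank⟩, rfl⟩
    exact ⟨(realize_elim_comp_equiv σ _ y c).2 hπ,
      ih (fun x hx => ⟨hS hx.1, (realize_elim_comp_equiv σ _ x y).2 hx.2⟩) hrank⟩

theorem JointRankGE.mono (hS : S ⊆ S') (h : JointRankGE Δ N S) : JointRankGE Δ N S' :=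
  h.map (Language.Equiv.refl L M) hS

theorem JointRankGE.nonempty (h : JointRankGE Δ N S) : S.Nonempty := by
  induction N generalizing S with
  | zero => exact h
  | succ N ih =>
    obtain ⟨j, c, hinf, -⟩ := h
    obtain ⟨y, -, hy⟩ := hinf.nonempty
    exact (ih hy).mono inter_subset_left

/-- The branching is infinite, so one of finitely many pieces inherits infinitely many branches. -/
theorem JointRankGE.exists_of_iUnion {τ : Type*} [Finite τ] {T : τ → Set (Fin n → M)}
    (h : JointRankGE Δ N (⋃ i, T i)) : ∃ i, JointRankGE Δ N (T i) := by
  induction N generalizing T with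
  | zero => exact nonempty_iUnion.1 h
  | succ N ih =>
    obtain ⟨j, c, hinf, hk⟩ := h
    by_contra! hno
    refine hinf ((finite_iUnion fun i => not_infinite.1 fun hi => hno i ⟨j, c, hi, hk⟩).subset ?_)
    rintro y ⟨hπ, hrank⟩
    rw [iUnion_inter] at hrank
    obtain ⟨i, hi⟩ := ih hrank
    exact mem_iUnion.2 ⟨i, hπ, hi⟩

/-- Along a branch of length `∑ j, t j + 1` some triple `j` is used more than `t j` times. -/
theorem JointRankGE.exists_rankGE [Fintype ι] (t : ι → ℕ) (ht : ∑ j, t j ≤ N)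
    (h : JointRankGE Δ (N + 1) S) : ∃ j, RankGE L (Δ j).δ (Δ j).π (Δ j).k (t j) S := by
  classical
  induction N generalizing t S with
  | zero =>
    obtain ⟨j, -⟩ := id h
    have htj : t j = 0 := by
      have := Finset.single_le_sum (f := t) (fun _ _ => Nat.zero_le _) (Finset.mem_univ j)
      lia
    exact ⟨j, htj ▸ h.nonempty⟩
  | succ N ih =>
    obtain ⟨j, c, hinf, hk⟩ := id h
    rcases htj : t j with _ | s
    · exact ⟨j, htj ▸ h.nonempty⟩
    · have hsum : ∑ i, Function.update t j s i ≤ N := by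
        have herase := Finset.add_sum_erase Finset.univ t (Finset.mem_univ j)
        rw [Finset.sum_update_of_mem (Finset.mem_univ j), Finset.sdiff_singleton_eq_erase]
        lia
      by_contra! hno
      refine hno j ?_
      rw [htj]
      refine ⟨c, hinf.mono ?_, hk⟩
      rintro y ⟨hπ, hrank⟩
      refine ⟨hπ, ?_⟩
      obtain ⟨i, hi⟩ := ih (Function.update t j s) hsum hrank
      rcases eq_or_ne i j with rfl | hij
      · rwa [Function.update_self] at hi
      · rw [Function.update_of_ne hij] at hi
        exact absurd (hi.mono inter_subset_left) (hno i)

theorem IsRosy.exists_not_jointRankGE [Finite ι] (h : IsRosy L (M := M))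
    (Δ : ι → RankTriple L n) : ∃ N, ¬ JointRankGE Δ N (univ : Set (Fin n → M)) := by
  cases nonempty_fintype ι
  choose t ht using fun j => h n _ _ (Δ j).k (Δ j).δ (Δ j).π
  refine ⟨∑ j, t j + 1, fun hrank => ?_⟩
  obtain ⟨j, hj⟩ := hrank.exists_rankGE t le_rfl
  exact ht j hj

end JointRank

section RosyToSymmetry

variable {κ : Cardinal.{u}} {n p : ℕ} {ι : Type*} {A B F : Set M}

/-- `Y` is defined by an instance `T.δ(x, e)` whose þ-dividing over `A` is witnessed inside `B` by
the family of instances at the realizations of `T.π(y, z)`. -/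
def RankTriple.DividesVia (T : RankTriple L p) (A B : Set M) (Y : Set (Fin p → M)) : Prop :=
  ∃ (e : Fin T.m → M) (z : Fin T.r → M), range e ⊆ B ∧ range z ⊆ B ∧
    T.π.Realize (Sum.elim e z) ∧ KInconsistent L T.δ {y | T.π.Realize (Sum.elim y z)} T.k ∧
    (typeSet L (A ∪ range z) e).Infinite ∧ Y = {x | T.δ.Realize (Sum.elim x e)}

/-- `X` þ-forks over `A`, with disjuncts taken from `Δ` that þ-divide over `A` inside `B`. -/
def ForksVia (Δ : ι → RankTriple L p) (A B : Set M) (X : Set (Fin p → M)) : Prop :=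
  ∃ Y : ι → Set (Fin p → M), (∀ j, (Δ j).DividesVia A B (Y j)) ∧ X ⊆ ⋃ j, Y j

theorem RankTriple.DividesVia.mono {T : RankTriple L p} {B' : Set M} {Y : Set (Fin p → M)}
    (h : T.DividesVia A B Y) (hB : B ⊆ B') : T.DividesVia A B' Y :=
  let ⟨e, z, he, hz, hrest⟩ := h
  ⟨e, z, he.trans hB, hz.trans hB, hrest⟩

theorem RankTriple.DividesVia.map {T : RankTriple L p} {Y : Set (Fin p → M)}
    (h : T.DividesVia A B Y) {σ : M ≃[L] M} (hσ : ∀ x ∈ A, σ x = x) :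
    T.DividesVia A (σ '' B) {x | σ.symm ∘ x ∈ Y} := by
  obtain ⟨e, z, he, hz, hπ, hk, hinf, rfl⟩ := h
  refine ⟨σ ∘ e, σ ∘ z, ?_, ?_, (realize_elim_comp_equiv σ _ e z).2 hπ,
    kInconsistent_setOf_realize_comp_equiv σ hk, ?_, ?_⟩
  · exact (range_comp σ e).trans_subset (image_mono he)
  · exact (range_comp σ z).trans_subset (image_mono hz)
  · rw [← image_union_range_equiv hσ]
    exact infinite_typeSet_image_equiv σ hinf
  · ext x
    rw [mem_ofPred_eq, mem_ofPred_eq, ← realize_elim_comp_equiv σ, ← Function.comp_assoc]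
    simp [Function.comp_def]

theorem ForksVia.map {Δ : ι → RankTriple L p} {X : Set (Fin p → M)} (h : ForksVia Δ A B X)
    {σ : M ≃[L] M} (hσ : ∀ x ∈ A, σ x = x) :
    ForksVia Δ A (σ '' B) {x | σ.symm ∘ x ∈ X} := by
  obtain ⟨Y, hY, hX⟩ := h
  exact ⟨_, fun j => (hY j).map hσ, fun x hx => by simpa using hX hx⟩

theorem IsMonster.exists_dividesVia (hM : IsMonster L (M := M) κ) (hκ : ℵ₀ < κ) (hA : #A < κ)
    {Y : Set (Fin p → M)} (hY : ThDividesSet L A Y) :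
    ∃ (T : RankTriple L p) (B : Set M), B.Finite ∧ T.DividesVia A B Y := by
  obtain ⟨m, δ, e, ⟨q, c, hinf, k, hk⟩, rfl⟩ := hY
  obtain ⟨D, hD, heD, hDk⟩ := hM.exists_definable_kInconsistent
    (mk_union_lt hκ hA (mk_lt_of_countable hκ (finite_range c).countable)) hk
  obtain ⟨r, z, π, hz, rfl⟩ := exists_formula_of_definable hD
  exact ⟨⟨δ, π, k⟩, range e ∪ range z, (finite_range e).union (finite_range z), e, z,
    subset_union_left, subset_union_right, heD, hDk,
    Infinite.mono (typeSet_anti (union_subset subset_union_left hz) e) hinf, rfl⟩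

theorem IsMonster.exists_forksVia (hM : IsMonster L (M := M) κ) (hκ : ℵ₀ < κ) (hA : #A < κ)
    {X : Set (Fin p → M)} (hX : ThForksSet L A X) :
    ∃ (s : ℕ) (Δ : Fin s → RankTriple L p) (B : Set M), B.Finite ∧ ForksVia Δ A B X := by
  obtain ⟨𝒴, hfin, hdiv, hcover⟩ := hX
  obtain ⟨s, Y, -, rfl⟩ := hfin.fin_param
  choose Δ B hB hΔ using fun j => hM.exists_dividesVia hκ hA (hdiv _ (mem_range_self j))
  exact ⟨s, Δ, ⋃ j, B j, finite_iUnion hB, Y, fun j => (hΔ j).mono (subset_iUnion B j), hcover⟩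

/-- The conjugates of a dividing parameter over `A ∪ F` move `S ∩ Y j` inside `S`, and there are
still infinitely many of them when `F` is independent from the witnesses of the forking. -/
theorem IsMonster.jointRankGE_succ_of_forksVia (hM : IsMonster L (M := M) κ) (hκ : ℵ₀ < κ)
    (hA : #A < κ) (hF : F.Finite) (hAF : AlgIndep L A B F) [Finite ι] {Δ : ι → RankTriple L p}
    {X S : Set (Fin p → M)} (hX : ForksVia Δ A B X) (hS : (A ∪ F).Definable L S) {N : ℕ}
    (hrank : JointRankGE Δ N (S ∩ X)) : JointRankGE Δ (N + 1) S := by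
  obtain ⟨Y, hY, hXY⟩ := hX
  obtain ⟨j, hj⟩ := (hrank.mono ((inter_subset_inter_right S hXY).trans_eq
    (inter_iUnion S Y))).exists_of_iUnion
  obtain ⟨e, z, he, hz, hπ, hk, hinf, hYj⟩ := hY j
  rw [hYj] at hj
  refine ⟨j, z, (hAF _ _ e z he hz hinf).mono fun y hy => ⟨?_, ?_⟩, hk⟩
  · exact typeSet_subset_of_mem (definable_fiber (definable_setOf_realize _)
      (subset_union_right.trans subset_union_left)) hπ hy
  · obtain ⟨τ, hτ, rfl⟩ := hM.homogeneous _ (mk_union_lt hκ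
      (mk_union_lt hκ hA (mk_lt_of_countable hκ (finite_range z).countable))
      (mk_lt_of_countable hκ hF.countable)) _ e y hy
    exact hj.map τ fun x hx => ⟨(comp_equiv_mem_iff hτ
      (hS.mono (union_subset_union_left F subset_union_left))).2 hx.1,
      (realize_elim_comp_equiv τ _ x e).2 hx.2⟩

/-- If `b` lies in þ-forking sets over parameters that can be chosen independent from any given
small set, then these sets can be intersected successively, and the rank drops at each step. -/
theorem IsMonster.exists_not_jointRankGE_of_forksVia (hM : IsMonster L (M := M) κ) (hκ : ℵ₀ < κ)
    (hA : #A < κ) {b : Fin p → M} [Finite ι] {Δ : ι → RankTriple L p}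
    (hforks : ∀ C : Set M, #C < κ → ∃ (w : Fin n → M) (X : Set (Fin p → M)) (B : Set M),
      AlgIndep L A C (range w) ∧ (A ∪ range w).Definable L X ∧ b ∈ X ∧ B.Finite ∧
        ForksVia Δ A B X)
    {N i : ℕ} (hN : ¬ JointRankGE Δ (N + i) (univ : Set (Fin p → M))) {C : Set M} (hC : #C < κ) :
    ∃ (S : Set (Fin p → M)) (F : Set M), F.Finite ∧ b ∈ S ∧ (A ∪ F).Definable L S ∧
      ¬ JointRankGE Δ N S ∧ AlgIndep L A C F := by
  induction i generalizing N C with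
  | zero =>
    exact ⟨univ, ∅, finite_empty, mem_univ b, definable_univ, hN, AlgIndep.empty⟩
  | succ i ih =>
    obtain ⟨w, X, B, hw, hX, hbX, hB, hforksX⟩ := hforks C hC
    have hsmall : #(C ∪ range w ∪ B : Set M) < κ :=
      mk_union_lt hκ (mk_union_lt hκ hC (mk_lt_of_countable hκ (finite_range w).countable))
        (mk_lt_of_countable hκ hB.countable)
    obtain ⟨S, F, hF, hbS, hS, hrank, hindep⟩ := ih (N := N + 1) (by rwa [add_right_comm]) hsmall
    refine ⟨S ∩ X, range w ∪ F, (finite_range w).union hF, ⟨hbS, hbX⟩, ?_, fun h => ?_,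
      hw.trans (hindep.mono_left subset_union_left)⟩
    · exact (hS.mono (union_subset_union_right A subset_union_right)).inter
        (hX.mono (union_subset_union_right A subset_union_left))
    · exact hrank (hM.jointRankGE_succ_of_forksVia hκ hA hF
        (hindep.mono_left subset_union_right) hforksX hS h)

/-- Over `A ∪ range b` the tuple `a` has a conjugate independent from `C`; conjugating the forking
set over `a` accordingly keeps `b` inside. -/
theorem IsMonster.exists_algIndep_forksVia (hM : IsMonster L (M := M) κ) (hκ : ℵ₀ < κ)
    (hA : #A < κ) {a : Fin n → M} {b : Fin p → M} (hfree : ¬ TypeThForks L a (A ∪ range b) A)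
    {E : Set (Fin p ⊕ Fin n → M)} (hE : A.Definable L E) (hbE : Sum.elim b a ∈ E)
    {Δ : ι → RankTriple L p} (hB : B.Finite) (hΔ : ForksVia Δ A B {x | Sum.elim x a ∈ E})
    {C : Set M} (hC : #C < κ) :
    ∃ (w : Fin n → M) (X : Set (Fin p → M)) (B : Set M), AlgIndep L A C (range w) ∧
      (A ∪ range w).Definable L X ∧ b ∈ X ∧ B.Finite ∧ ForksVia Δ A B X := by
  have hAb : #(A ∪ range b : Set M) < κ :=
    mk_union_lt hκ hA (mk_lt_of_countable hκ (finite_range b).countable)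
  obtain ⟨a', ha', hfree'⟩ :=
    hM.exists_sameType_not_typeThForks hκ hAb (mk_union_lt hκ hA hC) hfree
  obtain ⟨σ, hσ, rfl⟩ := hM.homogeneous _ hAb n a a' ha'
  have hσA : ∀ x ∈ A, σ x = x := fun x hx => hσ x (Or.inl hx)
  have hset : {x : Fin p → M | σ.symm ∘ x ∈ {y | Sum.elim y a ∈ E}} =
      {x | Sum.elim x (σ ∘ a) ∈ E} := by
    ext x
    rw [mem_ofPred_eq, mem_ofPred_eq, mem_ofPred_eq, ← comp_equiv_mem_iff hσA hE, Sum.comp_elim,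
      ← Function.comp_assoc]
    simp [Function.comp_def]
  refine ⟨σ ∘ a, {x | Sum.elim x (σ ∘ a) ∈ E}, σ '' B,
    (hM.algIndep_range_of_not_typeThForks hκ hA subset_union_left hfree').mono_left
      subset_union_right,
    definable_fiber (hE.mono subset_union_left) subset_union_right, ?_, hB.image σ,
    hset ▸ hΔ.map hσA⟩
  rwa [mem_ofPred_eq, ← comp_equiv_eq_self hσ subset_union_right, ← Sum.comp_elim,
    comp_equiv_mem_iff hσA hE]

theorem IsRosy.typeThForks_symm (hrosy : IsRosy L (M := M)) (hM : IsMonster L (M := M) κ)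
    (hκ : ℵ₀ < κ) (hA : #A < κ) {a : Fin n → M} {b : Fin p → M}
    (hb : TypeThForks L b (A ∪ range a) A) : TypeThForks L a (A ∪ range b) A := by
  by_contra hfree
  obtain ⟨X, hX, hbX, hXforks⟩ := typeThForks_iff.1 hb
  obtain ⟨s, Δ, B, hB, hΔ⟩ := hM.exists_forksVia hκ hA hXforks
  obtain ⟨E, hE, rfl⟩ := exists_definable_eq_fiber hX
  obtain ⟨N, hN⟩ := hrosy.exists_not_jointRankGE Δ
  obtain ⟨S, -, -, hbS, -, hrank, -⟩ := hM.exists_not_jointRankGE_of_forksVia hκ hA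
    (fun C hC => hM.exists_algIndep_forksVia hκ hA hfree hE hbX hB hΔ hC)
    (N := 0) (i := N) (by rwa [zero_add]) hA
  exact hrank ⟨b, hbS⟩

end RosyToSymmetry

section SymmetryToRosy

variable {κ : Cardinal.{u}} {n : ℕ} {A P : Set M} {T : RankTriple L n} {l N : ℕ}

/-- The parameters `(y, z)` admissible in a dividing step of the rank: `y` realizes `T.π(·, z)`,
whose realizations give a `T.k`-inconsistent family of instances of `T.δ`. -/
def RankTriple.dividingPairs (T : RankTriple L n) : Set (Fin T.m ⊕ Fin T.r → M) :=
  {v | T.π.Realize v ∧ KInconsistent L T.δ {y | T.π.Realize (Sum.elim y (v ∘ Sum.inr))} T.k}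

theorem RankTriple.thDivides_of_mem_dividingPairs {v : Fin T.m ⊕ Fin T.r → M}
    (hv : v ∈ T.dividingPairs)
    (hinf : (typeSet L (A ∪ range (v ∘ Sum.inr)) (v ∘ Sum.inl)).Infinite) :
    ThDivides L T.δ (v ∘ Sum.inl) A := by
  refine ⟨T.r, v ∘ Sum.inr, hinf, T.k, hv.2.mono ?_⟩
  refine typeSet_subset_of_mem (definable_fiber (definable_setOf_realize T.π)
    subset_union_right) ?_
  rw [mem_ofPred_eq, Sum.elim_comp_inl_inr]
  exact hv.1

theorem RankTriple.definable_dividingPairs :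
    A.Definable L (T.dividingPairs : Set (Fin T.m ⊕ Fin T.r → M)) := by
  let E : Set ((Fin T.r ⊕ Fin n) ⊕ Fin T.m → M) :=
    {w | T.π.Realize (Sum.elim (w ∘ Sum.inr) (w ∘ Sum.inl ∘ Sum.inl)) ∧
      T.δ.Realize (Sum.elim (w ∘ Sum.inl ∘ Sum.inr) (w ∘ Sum.inr))}
  have hE : A.Definable L E :=
    (definable_setOf_elim_mem (definable_setOf_realize T.π) _ _).inter
      (definable_setOf_elim_mem (definable_setOf_realize T.δ) _ _)
  have hk := (definable_setOf_coe_le_encard T.k hE).exists_of_finite.compl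
  convert (definable_setOf_realize T.π).inter (hk.preimage_comp Sum.inr) using 1
  ext v
  simp only [dividingPairs, kInconsistent_iff_encard_lt, mem_ofPred_eq, mem_inter_iff,
    mem_preimage, mem_compl_iff, not_exists, not_le]
  rfl

/-- The local þ-rank with infinite branching replaced by branching of size more than `l`, which
makes it definable. -/
def BranchingRankGE (T : RankTriple L n) (l : ℕ) : ℕ → Set (Fin n → M) → Prop
  | 0, S => S.Nonempty
  | N + 1, S => ∃ c : Fin T.r → M, (l : ℕ∞) < {w | Sum.elim w c ∈ T.dividingPairs ∧
      BranchingRankGE T l N (S ∩ {x | T.δ.Realize (Sum.elim x w)})}.encard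

variable {S S' : Set (Fin n → M)}

theorem BranchingRankGE.of_rankGE (h : RankGE L T.δ T.π T.k N S) : BranchingRankGE T l N S := by
  induction N generalizing S with
  | zero => exact h
  | succ N ih =>
    obtain ⟨c, hinf, hk⟩ := h
    have hbranch : {w | Sum.elim w c ∈ T.dividingPairs ∧
        BranchingRankGE T l N (S ∩ {x | T.δ.Realize (Sum.elim x w)})}.Infinite :=
      hinf.mono fun w hw => ⟨⟨hw.1, hk⟩, ih hw.2⟩
    exact ⟨c, (ENat.natCast_lt_top l).trans_eq hbranch.encard_eq.symm⟩

theorem BranchingRankGE.mono (hS : S ⊆ S') (h : BranchingRankGE T l N S) :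
    BranchingRankGE T l N S' := by
  induction N generalizing S S' with
  | zero => exact Nonempty.mono hS h
  | succ N ih =>
    obtain ⟨c, hc⟩ := h
    exact ⟨c, hc.trans_le (encard_le_encard fun w hw =>
      ⟨hw.1, ih (inter_subset_inter_left _ hS) hw.2⟩)⟩

theorem BranchingRankGE.of_le_branching {l' : ℕ} (hl : l ≤ l') (h : BranchingRankGE T l' N S) :
    BranchingRankGE T l N S := by
  induction N generalizing S with
  | zero => exact h
  | succ N ih =>
    obtain ⟨c, hc⟩ := h
    exact ⟨c, (Nat.cast_le.2 hl).trans_lt (hc.trans_le (encard_le_encard fun w hw =>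
      ⟨hw.1, ih hw.2⟩))⟩

theorem BranchingRankGE.of_le {N' : ℕ} (hN : N ≤ N') (h : BranchingRankGE T l N' S) :
    BranchingRankGE T l N S := by
  induction N', hN using Nat.le_induction with
  | base => exact h
  | succ N' _ ih =>
    obtain ⟨c, hc⟩ := h
    obtain ⟨w, -, hw⟩ := encard_pos.1 (bot_le.trans_lt hc)
    exact ih (hw.mono inter_subset_left)

theorem definable_setOf_branchingRankGE {β : Type*} {D : Set (β ⊕ Fin n → M)}
    (hD : A.Definable L D) :
    A.Definable L {v : β → M | BranchingRankGE T l N {x | Sum.elim v x ∈ D}} := by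
  induction N generalizing β with
  | zero => exact hD.exists_of_finite
  | succ N ih =>
    let D' : Set (((β ⊕ Fin T.r) ⊕ Fin T.m) ⊕ Fin n → M) :=
      {u | Sum.elim (u ∘ Sum.inl ∘ Sum.inl ∘ Sum.inl) (u ∘ Sum.inr) ∈ D ∧
        T.δ.Realize (Sum.elim (u ∘ Sum.inr) (u ∘ Sum.inl ∘ Sum.inr))}
    have hD' : A.Definable L D' := (definable_setOf_elim_mem hD _ _).inter
      (definable_setOf_elim_mem (definable_setOf_realize T.δ) _ _)
    have hpairs : A.Definable L {u : (β ⊕ Fin T.r) ⊕ Fin T.m → M |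
        Sum.elim (u ∘ Sum.inr) (u ∘ Sum.inl ∘ Sum.inr) ∈ T.dividingPairs} :=
      definable_setOf_elim_mem T.definable_dividingPairs _ _
    convert (definable_setOf_coe_le_encard (l + 1) (hpairs.inter (ih hD'))).exists_of_finite
      using 1
    ext v
    simp only [BranchingRankGE, mem_ofPred_eq, Nat.cast_add, Nat.cast_one,
      ENat.add_one_le_iff (ENat.natCast_ne_top l)]
    rfl

theorem HasBoundedFibers.union {α γ : Type*} {χ χ' : Set (α ⊕ γ → M)} {k k' : ℕ}
    (h : HasBoundedFibers χ k) (h' : HasBoundedFibers χ' k') :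
    HasBoundedFibers (χ ∪ χ') (k + k') := fun c =>
  (encard_union_le {y | Sum.elim y c ∈ χ} {y | Sum.elim y c ∈ χ'}).trans_lt
    ((ENat.add_lt_add (h c) (h' c)).trans_eq (Nat.cast_add k k').symm)

/-- Branching of every finite size leaves room outside any set with bounded fibers. -/
theorem IsMonster.exists_mem_dividingPairs (hM : IsMonster L (M := M) κ) (hκ : ℵ₀ < κ)
    (hP : #P < κ) (hS : P.Definable L S) (hrank : ∀ N, BranchingRankGE T N N S) :
    ∃ v ∈ T.dividingPairs,
      (typeSet L (P ∪ range (v ∘ Sum.inr)) (v ∘ Sum.inl)).Infinite ∧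
      ∀ N, BranchingRankGE T N N (S ∩ {x | T.δ.Realize (Sum.elim x (v ∘ Sum.inl))}) := by
  let V := Fin T.m ⊕ Fin T.r → M
  let J := {q : Set V × ℕ // P.Definable L q.1 ∧ HasBoundedFibers q.1 q.2} × ℕ
  have : Nonempty J := ⟨⟨(∅, 1), definable_empty, fun c => by simp⟩, 0⟩
  let R (N : ℕ) : Set V :=
    {v | BranchingRankGE T N N (S ∩ {x | T.δ.Realize (Sum.elim x (v ∘ Sum.inl))})}
  have hR (N : ℕ) : P.Definable L (R N) :=
    definable_setOf_branchingRankGE ((hS.preimage_comp Sum.inr).inter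
      (definable_setOf_elim_mem (definable_setOf_realize T.δ) Sum.inr (Sum.inl ∘ Sum.inl)))
  have hRanti {N N' : ℕ} (hN : N ≤ N') : R N' ⊆ R N := fun v hv =>
    (BranchingRankGE.of_le hN hv).of_le_branching hN
  obtain ⟨v, hv⟩ := hM.nonempty_iInter_of_directed hP
    (D := fun j : J => (T.dividingPairs ∩ R j.2) \ j.1.1.1)
    (fun j => (T.definable_dividingPairs.inter (hR j.2)).sdiff j.1.2.1)
    (fun i j => ⟨⟨⟨(i.1.1.1 ∪ j.1.1.1, i.1.1.2 + j.1.1.2), i.1.2.1.union j.1.2.1,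
        i.1.2.2.union j.1.2.2⟩, max i.2 j.2⟩,
      sdiff_subset_sdiff (inter_subset_inter_right _ (hRanti (le_max_left _ _)))
        subset_union_left,
      sdiff_subset_sdiff (inter_subset_inter_right _ (hRanti (le_max_right _ _)))
        subset_union_right⟩)
    fun ⟨⟨⟨χ, k⟩, _, hχ⟩, N⟩ => by
      obtain ⟨c, hc⟩ := (hrank (max k N + 1)).of_le_branching (Nat.le_succ _)
      obtain ⟨w, hw, hwχ⟩ := not_subset.1 fun hsub => (encard_le_encard hsub).not_gt
        ((hχ c).trans ((Nat.cast_le.2 (le_max_left k N)).trans_lt hc))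
      exact ⟨Sum.elim w c, ⟨hw.1, hRanti (le_max_right k N) hw.2⟩, hwχ⟩
  rw [mem_iInter] at hv
  refine ⟨v, (hv (Classical.arbitrary J)).1.1, fun hfin => ?_, fun N =>
    (hv ⟨(Classical.arbitrary J).1, N⟩).1.2⟩
  obtain ⟨χ, k, hχ, hk, hvχ⟩ := (hM.finite_typeSet_union_range_iff hκ hP).1 hfin
  rw [Sum.elim_comp_inl_inr] at hvχ
  exact (hv ⟨⟨(χ, k), hχ, hk⟩, 0⟩).2 hvχ

theorem IsMonster.exists_dividing_seq (hM : IsMonster L (M := M) κ) (hκ : ℵ₀ < κ)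
    (hrank : ∀ N, RankGE L T.δ T.π T.k N (univ : Set (Fin n → M))) :
    ∃ (P : ℕ → Set M) (b : ℕ → Fin T.m ⊕ Fin T.r → M), Monotone P ∧ (∀ i, (P i).Finite) ∧
      (∀ i, range (b i) ⊆ P (i + 1)) ∧ (∀ i, b i ∈ T.dividingPairs) ∧
      (∀ i, (typeSet L (P i ∪ range (b i ∘ Sum.inr)) (b i ∘ Sum.inl)).Infinite) ∧
      ∀ i, ∃ x : Fin n → M, ∀ j < i, T.δ.Realize (Sum.elim x (b j ∘ Sum.inl)) := by
  let State := {q : Set M × Set (Fin n → M) //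
    q.1.Finite ∧ q.1.Definable L q.2 ∧ ∀ N, BranchingRankGE T N N q.2}
  choose v hv hinf hR using fun q : State =>
    hM.exists_mem_dividingPairs hκ (mk_lt_of_countable hκ q.2.1.countable) q.2.2.1 q.2.2.2
  let next (q : State) : State :=
    ⟨(q.1.1 ∪ range (v q), q.1.2 ∩ {x | T.δ.Realize (Sum.elim x (v q ∘ Sum.inl))}),
      q.2.1.union (finite_range _), (q.2.2.1.mono subset_union_left).inter
        (definable_fiber (definable_setOf_realize T.δ)
          ((range_comp_subset_range _ _).trans subset_union_right)), hR q⟩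
  let s (i : ℕ) : State := next^[i] ⟨(∅, univ), finite_empty, definable_univ, fun N =>
    .of_rankGE (hrank N)⟩
  have hs (i : ℕ) : s (i + 1) = next (s i) := Function.iterate_succ_apply' next i _
  have hanti : Antitone fun i => (s i).1.2 := antitone_nat_of_succ_le fun i => by
    rw [hs]
    exact inter_subset_left
  refine ⟨fun i => (s i).1.1, fun i => v (s i), monotone_nat_of_le_succ fun i => ?_,
    fun i => (s i).2.1, fun i => ?_, fun i => hv _, fun i => hinf _, fun i => ?_⟩
  · rw [hs]
    exact subset_union_left
  · dsimp only
    rw [hs]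
    exact subset_union_right
  · obtain ⟨x, hx⟩ := (s i).2.2.2 0
    refine ⟨x, fun j hj => ?_⟩
    have hxj : x ∈ (s (j + 1)).1.2 := hanti hj hx
    rw [hs] at hxj
    exact hxj.2

/-- A limit `v` of the dividing sequence along a nonprincipal ultrafilter is not algebraic, as each
bounded-fiber set over the union of the `P i` lives over a single `P i`. -/
theorem IsMonster.infinite_typeSet_of_hyperfilter_limit (hM : IsMonster L (M := M) κ)
    (hκ : ℵ₀ < κ) {m r : ℕ} {P : ℕ → Set M} (hP : Monotone P) (hfin : ∀ i, (P i).Finite)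
    {b : ℕ → Fin m ⊕ Fin r → M}
    (hinf : ∀ i, (typeSet L (P i ∪ range (b i ∘ Sum.inr)) (b i ∘ Sum.inl)).Infinite)
    {v : Fin m ⊕ Fin r → M} (hv : ∀ D, (⋃ i, P i).Definable L D → v ∈ D →
      ∀ᶠ i in Filter.hyperfilter ℕ, b i ∈ D) :
    (typeSet L ((⋃ i, P i) ∪ range (v ∘ Sum.inr)) (v ∘ Sum.inl)).Infinite := by
  intro hvfin
  obtain ⟨χ, k, hχ, hk, hvχ⟩ := (hM.finite_typeSet_union_range_iff hκ
    (mk_lt_of_countable hκ (countable_iUnion fun i => (hfin i).countable))).1 hvfin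
  obtain ⟨A₀, hA₀, hχ₀⟩ := definable_iff_finitely_definable.1 hχ
  obtain ⟨N, hN⟩ := hP.directed_le.exists_mem_subset_of_finset_subset_biUnion hA₀
  have hbχ := hv χ hχ (by rwa [Sum.elim_comp_inl_inr] at hvχ)
  obtain ⟨i, hi, hNi⟩ := (hbχ.and
    (Nat.hyperfilter_le_atTop (Filter.eventually_ge_atTop N))).exists
  refine hinf i ((hM.finite_typeSet_union_range_iff hκ
    (mk_lt_of_countable hκ (hfin i).countable)).2
      ⟨χ, k, hχ₀.mono (hN.trans (hP hNi)), hk, ?_⟩)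
  rwa [Sum.elim_comp_inl_inr]

theorem IsMonster.exists_thDivides_not_typeThForks (hM : IsMonster L (M := M) κ) (hκ : ℵ₀ < κ)
    (hrank : ∀ N, RankGE L T.δ T.π T.k N (univ : Set (Fin n → M))) :
    ∃ (C : Set M) (x : Fin n → M) (a : Fin T.m → M), C.Countable ∧ ThDivides L T.δ a C ∧
      T.δ.Realize (Sum.elim x a) ∧ ¬ TypeThForks L a (C ∪ range x) C := by
  obtain ⟨P, b, hP, hfin, hbP, hb, hinf, hcons⟩ := hM.exists_dividing_seq hκ hrank
  have hbC (i : ℕ) : range (b i) ⊆ ⋃ i, P i := (hbP i).trans (subset_iUnion P (i + 1))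
  have hC : (⋃ i, P i).Countable := countable_iUnion fun i => (hfin i).countable
  choose w hw using hcons
  obtain ⟨x, hx⟩ := hM.exists_forall_mem_iff_eventually (mk_lt_of_countable hκ hC)
    (Filter.hyperfilter ℕ) w
  have hxb (i : ℕ) : T.δ.Realize (Sum.elim x (b i ∘ Sum.inl)) :=
    (hx _ (definable_fiber (definable_setOf_realize T.δ)
      ((range_comp_subset_range _ _).trans (hbC i)))).2
      (Nat.hyperfilter_le_atTop ((Filter.eventually_gt_atTop i).mono fun j hj => hw j i hj))
  obtain ⟨v, hv⟩ := hM.exists_forall_mem_iff_eventually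
    (mk_lt_of_countable hκ (hC.union (finite_range x).countable)) (Filter.hyperfilter ℕ) b
  refine ⟨⋃ i, P i, x, v ∘ Sum.inl, hC, T.thDivides_of_mem_dividingPairs ?_
    (hM.infinite_typeSet_of_hyperfilter_limit hκ hP hfin hinf fun D hD =>
      (hv D (hD.mono subset_union_left)).1), ?_,
    not_typeThForks_of_forall_exists_range_subset fun D hD hvD => ?_⟩
  · exact (hv _ T.definable_dividingPairs).2 (.of_forall hb)
  · exact (hv {v | T.δ.Realize (Sum.elim x (v ∘ Sum.inl))}
      ((definable_fiber_left (definable_setOf_realize T.δ) subset_union_right).preimage_comp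
        Sum.inl)).2 (.of_forall hxb)
  · obtain ⟨i, hi⟩ := ((hv _ (hD.preimage_comp Sum.inl)).1 hvD).exists
    exact ⟨_, hi, (range_comp_subset_range _ _).trans (hbC i)⟩

theorem isRosy_of_typeThForks_symm (hM : IsMonster L (M := M) κ) (hκ : ℵ₀ < κ)
    (hsymm : ∀ (n p : ℕ) (a : Fin n → M) (b : Fin p → M) (A : Set M), A.Countable →
      TypeThForks L a (A ∪ range b) A → TypeThForks L b (A ∪ range a) A) :
    IsRosy L (M := M) := by
  intro n m r k δ π
  by_contra! hrank
  obtain ⟨C, x, a, hC, hdiv, hxa, hfree⟩ :=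
    hM.exists_thDivides_not_typeThForks hκ (T := ⟨δ, π, k⟩) hrank
  exact hfree (hsymm n m x a C hC (typeThForks_iff.2
    ⟨_, definable_fiber (definable_setOf_realize δ) subset_union_right, hxa,
      ThDividesSet.thForksSet ⟨m, δ, a, hdiv, rfl⟩⟩))

end SymmetryToRosy

end ThForking

open ThForking in
theorem rosy_iff_thForking_symmetry_general
    (L : FirstOrder.Language.{u, u}) (M : Type u) [L.Structure M]
    (κ : Cardinal.{u}) (hκ : ℵ₀ < κ) (hM : IsMonster L (M := M) κ) :
    IsRosy L (M := M) ↔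
      ∀ (n p : ℕ) (a : Fin n → M) (b : Fin p → M) (A : Set M), #A < κ →
        (¬ TypeThForks L a (A ∪ Set.range b) A ↔
          ¬ TypeThForks L b (A ∪ Set.range a) A) := by
  constructor
  · intro hrosy n p a b A hA
    exact not_congr ⟨hrosy.typeThForks_symm hM hκ hA, hrosy.typeThForks_symm hM hκ hA⟩
  · intro hsymm
    exact isRosy_of_typeThForks_symm hM hκ fun n p a b A hA =>
      (not_iff_not.1 (hsymm n p a b A (mk_lt_of_countable hκ hA))).1

open ThForking in
/-- Let `T` be a complete first-order theory (realized as the theory of a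
monster model `M`).  Then `T` is rosy if and only if þ-forking satisfies symmetry:
for all tuples `a, b` and all (small) sets `A`, `tp(a/Ab)` does not þ-fork over `A` if and
only if `tp(b/Aa)` does not þ-fork over `A`. -/
theorem rosy_iff_thForking_symmetry
    (L : FirstOrder.Language.{u, u}) (M : Type u) [L.Structure M]
    (κ : Cardinal.{u}) (hκ : max Cardinal.aleph0 L.card < κ)
    (hM : IsMonster L (M := M) κ) :
    IsRosy L (M := M) ↔
      ∀ (n p : ℕ) (a : Fin n → M) (b : Fin p → M) (A : Set M), #A < κ →
        (¬ TypeThForks L a (A ∪ Set.range b) A ↔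
          ¬ TypeThForks L b (A ∪ Set.range a) A) :=
  rosy_iff_thForking_symmetry_general L M κ ((le_max_left _ _).trans_lt hκ) hM
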